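/- Fix integers k ≥ 1 and k₀, k₁, k₂ ≥ 0 with k₀ + k₁ + k₂ = k and k₀·k₂ = 0. Call a (k,3)-admissible configuration a finitely supported sequence (a_i)_{i≥0} of nonnegative integers with a_i + a_{i+1} + a_{i+2} ≤ k for all i ≥ 0, a₀ ≤ k₀, and a₀ + a₁ ≤ k₀ + k₁; its charge is (∑_{t≥0} a_{2t}, ∑_{t≥0} a_{2t+1}) and its degree is ∑_{t≥0} (t+1)·(a_{2t} + a_{2t+1}). Then for all nonnegative integers n₁, n₂, d, the number of (k,3)-admissible configurations of charge (n₁, n₂) and degree d equals the sum, over all tuples of nonnegative integers (M_{i,c})_{i=1,2; c=1,…,k} with ∑_{c=1}^{k} c·M_{1,c} = n₁ and ∑_{c=1}^{k} c·M_{2,c} = n₂, of the number of 2k-tuples of partitions (λ^{(i,c)}) such that λ^{(i,c)} has at most M_{i,c} parts and ∑_{i,c} |λ^{(i,c)}| = d − E(M), where E(M) = ∑_{c,c'} min(c,c') M_{1,c} M_{1,c'} + ∑_{c,c'} max(0, c+c'−k) M_{1,c} M_{2,c'} + ∑_{c,c'} min(c,c') M_{2,c} M_{2,c'} + ∑_{c}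 max(0, c−k₀) M_{1,c} + ∑_{c} max(0, c−k₀−k₁) M_{2,c}. -/

import Mathlib

/-- A `(k,3)`-admissible configuration (for `Λ` determined by `k₀, k₁`): a finitely
supported sequence of nonnegative integers satisfying the difference and initial
conditions. -/
def IsAdmissibleConfig (k k₀ k₁ : ℕ) (a : ℕ →₀ ℕ) : Prop :=
  (∀ i : ℕ, a i + a (i + 1) + a (i + 2) ≤ k) ∧ a 0 ≤ k₀ ∧ a 0 + a 1 ≤ k₀ + k₁

/-- The charge `(∑_t a_{2t}, ∑_t a_{2t+1})` of a configuration. -/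
def configCharge (a : ℕ →₀ ℕ) : ℕ × ℕ :=
  (a.sum fun i v => if Even i then v else 0, a.sum fun i v => if Odd i then v else 0)

/-- The degree `∑_t (t+1)(a_{2t} + a_{2t+1})` of a configuration. -/
def configDegree (a : ℕ →₀ ℕ) : ℕ :=
  a.sum fun i v => (i / 2 + 1) * v

/-- The exponent `E(M) = ᵗM Q^{(k)} M + L^{(k)}_Λ · M` of the fermionic formula, where
`M i j` is the number of quasi-particles of color `γ_{i+1}` and charge `j + 1`. -/
def fermionicExponent (k k₀ k₁ : ℕ) (M : Fin 2 → Fin k → ℕ) : ℤ :=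
  (∑ j : Fin k, ∑ j' : Fin k,
      ((min ((j : ℕ) + 1) ((j' : ℕ) + 1) : ℕ) : ℤ) * (M 0 j : ℤ) * (M 0 j' : ℤ))
  + (∑ j : Fin k, ∑ j' : Fin k,
      max 0 ((((j : ℕ) : ℤ) + 1) + (((j' : ℕ) : ℤ) + 1) - (k : ℤ))
        * (M 0 j : ℤ) * (M 1 j' : ℤ))
  + (∑ j : Fin k, ∑ j' : Fin k,
      ((min ((j : ℕ) + 1) ((j' : ℕ) + 1) : ℕ) : ℤ) * (M 1 j : ℤ) * (M 1 j' : ℤ))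
  + (∑ j : Fin k, max 0 ((((j : ℕ) : ℤ) + 1) - (k₀ : ℤ)) * (M 0 j : ℤ))
  + (∑ j : Fin k, max 0 ((((j : ℕ) : ℤ) + 1) - (k₀ : ℤ) - (k₁ : ℤ)) * (M 1 j : ℤ))

section WordCalculus

variable {R : Type*} [CommRing R]

/-- A layer `(l, l')`; a word is a list of layers. -/
abbrev Layer := ℕ × ℕ

/-- `v` and `v⁻` agree, except that the first coordinate of the head decreases by one. -/
inductive DecFst : List Layer → List Layer → Prop
  | nil : DecFst [] []
  | cons (m m' : ℕ) (v : List Layer) : DecFst ((m + 1, m') :: v) ((m, m') :: v)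

inductive DecSnd : List Layer → List Layer → Prop
  | nil : DecSnd [] []
  | cons (m m' : ℕ) (v : List Layer) : DecSnd ((m, m' + 1) :: v) ((m, m') :: v)

/-- Raise the first coordinate of the letter left of the split point. -/
def plusFst (W : List Layer → List Layer → R) : List Layer → List Layer → R
  | [], _ => 0
  | (a, a') :: u, v => W ((a + 1, a') :: u) v

def plusSnd (W : List Layer → List Layer → R) : List Layer → List Layer → R
  | _, [] => 0
  | u, (b, b') :: v => W u ((b, b' + 1) :: v)

/-- The local relations. `W u v` is the value on the word `u.reverse ++ v`. -/
structure Good (W : List Layer → List Layer → R) (z₁ z₂ q : R) : Prop where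
  zip : ∀ a u v, W (a :: u) v = W u (a :: v)
  relX : ∀ u l l' v v', DecFst v v' →
    W u ((l, l') :: v) - W u ((l + 1, l') :: v') =
      z₁ * q ^ (1 + l) * (W u ((l + 2, l' + 1) :: v) - plusFst W u ((l + 1, l' + 1) :: v))
  relY : ∀ v l l' u u', DecSnd u u' →
    W ((l, l') :: u) v - W ((l, l' + 1) :: u') v =
      z₂ * q ^ (1 + l') * (W ((l + 1, l' + 2) :: u) v - plusSnd W ((l + 1, l' + 1) :: u) v)

/-- The shift of a layer. -/
def tau (a : Layer) : Layer := (a.2 + 1, a.1)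

/-- The shift operator on functions of words. -/
def shiftW (W : List Layer → List Layer → R) (u v : List Layer) : R :=
  W (v.map tau) (u.map tau)

theorem Good.shift {W : List Layer → List Layer → R} {z₁ z₂ q : R} (h : Good W z₁ z₂ q) :
    Good (shiftW W) z₂ (z₁ * q) q where
  zip a u v := by simp [shiftW, h.zip]
  relX u l l' v v' hv := by
    have hd : DecSnd (v.map tau) (v'.map tau) := by
      cases hv with
      | nil => exact DecSnd.nil
      | cons m m' v => exact DecSnd.cons _ _ _
    have := h.relY (u.map tau) (l' + 1) l _ _ hd
    cases u with
    | nil => simpa [shiftW, plusFst, plusSnd, tau] using this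
    | cons a u => simpa [shiftW, plusFst, plusSnd, tau] using this
  relY v l l' u u' hu := by
    have hd : DecFst (u.map tau) (u'.map tau) := by
      cases hu with
      | nil => exact DecFst.nil
      | cons m m' v => exact DecFst.cons _ _ _
    have := h.relX (v.map tau) (l' + 1) l _ _ hd
    have e : z₁ * q * q ^ (1 + l') = z₁ * q ^ (1 + (l' + 1)) := by ring
    rw [e]
    cases v with
    | nil => simpa [shiftW, plusFst, plusSnd, tau] using this
    | cons a u => simpa [shiftW, plusFst, plusSnd, tau] using this

/-- The words `h f^n h^e` -/
def tailW (n e : ℕ) : List Layer :=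
  List.replicate n ((2, 2) : Layer) ++ List.replicate e ((2, 1) : Layer)

theorem tailW_zero_succ (e : ℕ) : tailW 0 (e + 1) = (2, 1) :: tailW 0 e := by
  simp [tailW, List.replicate_succ]

theorem tailW_succ (n e : ℕ) : tailW (n + 1) e = (2, 2) :: tailW n e := by
  simp [tailW, List.replicate_succ]


/-- The extra summand in the recursion of `sumG`. -/
def epsG (y : R) (n : ℕ) : ℕ → (List Layer → R) → R
  | 0, _ => 0
  | e + 1, g => y ^ n * g ((2, 1) :: tailW n e)

/-- Weighted sum of `g` over the words `i^{n-j} h f^j h^{e-1}`. -/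
def sumG (y : R) (e : ℕ) : ℕ → (List Layer → R) → R
  | 0, g => g (tailW 0 e)
  | n + 1, g => sumG y e n (fun v => g ((1, 0) :: v)) + epsG y (n + 1) e g

/-- Weighted sum of `g` over the words `i^{n-j} t f^j h^e`. -/
def sumH (y : R) (e : ℕ) : ℕ → (List Layer → R) → R
  | 0, g => g ((1, 1) :: tailW 0 e)
  | n + 1, g => sumH y e n (fun v => g ((1, 0) :: v)) + y ^ (n + 1) * g ((1, 1) :: tailW (n + 1) e)

theorem sumG_rel (y c : R) (e n : ℕ) : ∀ (g₁ g₂ g₃ g₄ : List Layer → R),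
    (∀ v, g₁ v - g₂ v = c * (g₃ v - g₄ v)) →
    sumG y e n g₁ - sumG y e n g₂ = c * (sumG y e n g₃ - sumG y e n g₄) := by
  induction n with
  | zero => intro g₁ g₂ g₃ g₄ h; exact h _
  | succ n ih =>
    intro g₁ g₂ g₃ g₄ h
    have h1 := ih _ _ _ _ (fun v => h ((1, 0) :: v))
    simp only [sumG]
    cases e with
    | zero => simp only [epsG]; linear_combination h1
    | succ e =>
      simp only [epsG]
      linear_combination h1 + y ^ (n + 1) * h ((2, 1) :: tailW (n + 1) e)

variable {W : List Layer → List Layer → R} {z₁ z₂ q : R}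

theorem Good.zipf (h : Good W z₁ z₂ q) (a : Layer) (u : List Layer) :
    (fun v => W u (a :: v)) = W (a :: u) := by
  funext v; rw [h.zip]

theorem Good.sumG_succ (h : Good W z₁ z₂ q) (y : R) (e n : ℕ) (u : List Layer) :
    sumG y e (n + 1) (W u) = sumG y e n (W ((1, 0) :: u)) + epsG y (n + 1) e (W u) := by
  simp only [sumG, h.zipf]

theorem Good.sumH_succ (h : Good W z₁ z₂ q) (y : R) (e n : ℕ) (u : List Layer) :
    sumH y e (n + 1) (W u) = sumH y e n (W ((1, 0) :: u))
      + y ^ (n + 1) * W u ((1, 1) :: tailW (n + 1) e) := by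
  simp only [sumH, h.zipf]

theorem Good.tel (h : Good W z₁ z₂ q) (e n : ℕ) : ∀ (a a' : ℕ) (u : List Layer),
    sumG (z₂ * q) e (n + 1) (W ((a, a' + 1) :: u)) - sumG (z₂ * q) e n (W ((1, 1) :: (a, a') :: u))
      = (z₂ * q) ^ (n + 1) * W ((a, a' + 1) :: u) (tailW (n + 1) e) := by
  induction n with
  | zero =>
    intro a a' u
    have h1 := sumG_rel (z₂ * q) (z₂ * q) e 0 _ _ _ _ (fun v => by
      simpa using h.relY v 1 0 _ _ (DecSnd.cons a a' u))
    rw [h.sumG_succ, tailW_succ, ← h.zip]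
    cases e with
    | zero =>
      simp only [sumG, epsG] at h1 ⊢
      simp only [tailW, plusSnd, List.replicate, List.append_nil] at h1 ⊢
      linear_combination h1
    | succ e =>
      simp only [sumG, epsG] at h1 ⊢
      rw [← h.zip (2, 1), tailW_succ]
      rw [tailW_zero_succ] at *
      simp only [plusSnd] at h1
      linear_combination h1
  | succ n ih =>
    intro a a' u
    have h1 := sumG_rel (z₂ * q) (z₂ * q) e (n + 1) _ _ _ _ (fun v => by
      simpa using h.relY v 1 0 _ _ (DecSnd.cons a a' u))
    have h2 := ih 2 1 ((a, a' + 1) :: u)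
    rw [h.sumG_succ, tailW_succ, ← h.zip]
    have h3 : sumG (z₂ * q) e (n + 1) (plusSnd W ((2, 1) :: (a, a' + 1) :: u)) =
      sumG (z₂ * q) e n (W ((1, 1) :: (2, 1) :: (a, a' + 1) :: u)) +
       epsG (z₂ * q) (n + 1) e (plusSnd W ((2, 1) :: (a, a' + 1) :: u)) := by
      simp only [sumG, plusSnd]
      rw [← h.zipf (1, 1)]
    rw [h3] at h1
    cases e with
    | zero =>
      simp only [epsG] at h1 ⊢
      linear_combination h1 + (z₂ * q) * h2
    | succ e =>
      simp only [epsG, plusSnd] at h1 ⊢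
      rw [← h.zip (2, 1), tailW_succ (n + 1)]
      linear_combination h1 + (z₂ * q) * h2

theorem Good.sumG_eq_sumH (h : Good W z₁ z₂ q) (e n : ℕ) : ∀ (u : List Layer),
    sumG (z₂ * q) e n (W ((1, 1) :: u)) = sumH (z₂ * q) e n (W u) := by
  induction n with
  | zero => intro u; simp only [sumG, sumH, h.zip]
  | succ n ih =>
    intro u
    have h1 := h.tel e n 1 0 u
    rw [h.sumH_succ, ← ih, ← h.zip (1, 1)]
    linear_combination h1

/-- The first coordinate of the letter left of the split point is raised and `t` inserted. -/
def sumP (W : List Layer → List Layer → R) (y : R) (e n : ℕ) (u : List Layer) : R :=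
  sumG y e n (fun v => plusFst W u ((1, 1) :: v))

theorem Good.sumP_cons (h : Good W z₁ z₂ q) (y : R) (e n a a' : ℕ) (u : List Layer) :
    sumP W y e n ((a, a') :: u) = sumG y e n (W ((1, 1) :: (a + 1, a') :: u)) := by
  simp only [sumP, plusFst, h.zipf]

theorem Good.core_zero (h : Good W z₁ z₂ q) (n : ℕ) : ∀ (u : List Layer),
    sumG (z₂ * q) 0 n (W ((0, 0) :: u)) - sumG (z₂ * q) 0 n (W ((1, 0) :: u)) =
      z₁ * q * (sumG (z₂ * q) 1 n (W u) - sumP W (z₂ * q) 0 n u) := by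
  induction n with
  | zero =>
    intro u
    simp only [sumG, sumP, h.zip]
    simpa [tailW] using h.relX u 0 0 _ _ DecFst.nil
  | succ n ih =>
    intro u
    have h1 := sumG_rel (z₂ * q) (z₁ * q) 0 n _ _ _ _ (fun v => by
      simpa using h.relX u 0 0 _ _ (DecFst.cons 0 0 v))
    have h2 := ih ((1, 0) :: u)
    have h3 := h.tel 0 n 2 0 u
    rw [h.sumP_cons] at h2
    rw [h.sumG_succ] at h3
    rw [h.sumG_succ, h.sumG_succ, h.sumG_succ]
    simp only [← h.zip] at h1
    simp only [sumP, sumG]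
    simp only [epsG, ← h.zip] at h1 h2 h3 ⊢
    linear_combination h1 + h2 + z₁ * q * h3

theorem Good.core_succ (h : Good W z₁ z₂ q) (e n : ℕ) : ∀ (u : List Layer),
    sumG (z₂ * q) (e + 1) n (W ((0, 0) :: u)) - sumH (z₂ * q) e n (W ((1, 0) :: u)) =
      z₁ * q * (sumG (z₂ * q) (e + 2) n (W u) - sumP W (z₂ * q) (e + 1) n u) := by
  induction n with
  | zero =>
    intro u
    have h1 := h.relX u 0 0 _ _ (DecFst.cons 1 1 (tailW 0 e))
    simp only [sumG, sumH, sumP, h.zip, tailW_zero_succ]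
    simpa using h1
  | succ n ih =>
    intro u
    have h1 := sumG_rel (z₂ * q) (z₁ * q) (e + 1) n _ _ _ _ (fun v => by
      simpa using h.relX u 0 0 _ _ (DecFst.cons 0 0 v))
    have h2 := ih ((1, 0) :: u)
    have h3 := h.tel (e + 1) n 2 0 u
    have h4 := h.relX u 0 0 _ _ (DecFst.cons 1 1 (tailW (n + 1) e))
    rw [h.sumP_cons] at h2
    rw [h.sumG_succ] at h3
    rw [h.sumG_succ, h.sumG_succ, h.sumH_succ]
    simp only [← h.zip] at h1
    simp only [sumP, sumG]
    simp only [epsG, ← h.zip, zero_add, one_add_one_eq_two, add_zero, pow_one] at h1 h2 h3 h4 ⊢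
    linear_combination h1 + h2 + z₁ * q * h3 + (z₂ * q) ^ (n + 1) * h4

theorem Good.core_P (h : Good W z₁ z₂ q) (e n : ℕ) (u : List Layer) :
    sumG (z₂ * q) (e + 1) n (W ((0, 0) :: u)) - sumP W (z₂ * q) e n ((0, 0) :: u) =
      z₁ * q * (sumG (z₂ * q) (e + 2) n (W u) - sumP W (z₂ * q) (e + 1) n u) := by
  rw [h.sumP_cons, h.sumG_eq_sumH]
  exact h.core_succ e n u

/-- `o^a u` -/
def ozs (a : ℕ) (u : List Layer) : List Layer := List.replicate a ((0, 0) : Layer) ++ u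

theorem ozs_succ (a : ℕ) (u : List Layer) : ozs (a + 1) u = (0, 0) :: ozs a u := by
  simp [ozs, List.replicate_succ]

theorem Good.core_iter (h : Good W z₁ z₂ q) (a n : ℕ) : ∀ (e : ℕ) (u : List Layer),
    sumG (z₂ * q) (e + 1) n (W (ozs a u)) - sumP W (z₂ * q) e n (ozs a u) =
      (z₁ * q) ^ a * (sumG (z₂ * q) (e + a + 1) n (W u) - sumP W (z₂ * q) (e + a) n u) := by
  induction a with
  | zero => intro e u; simp [ozs]
  | succ a ih =>
    intro e u
    have h2 := ih (e + 1) u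
    rw [ozs_succ, h.core_P, h2, show e + 1 + a = e + (a + 1) by ring]
    ring

theorem Good.dagger (h : Good W z₁ z₂ q) (a n : ℕ) (u : List Layer) :
    sumG (z₂ * q) 0 n (W (ozs (a + 1) u)) - sumG (z₂ * q) 0 (n + 1) (W (ozs a u)) =
      (z₁ * q) ^ (a + 1) * (sumG (z₂ * q) (a + 1) n (W u) - sumP W (z₂ * q) a n u) := by
  have h1 := h.core_zero n (ozs a u)
  have h2 := h.core_iter a n 0 u
  rw [ozs_succ, h.sumG_succ]
  simp only [epsG, zero_add] at h1 h2 ⊢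
  linear_combination h1 + z₁ * q * h2

theorem sumG_zero_fun (y : R) (e n : ℕ) : sumG y e n (fun _ => 0) = 0 := by
  induction n with
  | zero => rfl
  | succ n ih =>
    simp only [sumG, ih]
    cases e <;> simp [epsG]

theorem sumG_zero_eq (y : R) (n : ℕ) : ∀ g : List Layer → R,
    sumG y 0 n g = g (List.replicate n (1, 0)) := by
  induction n with
  | zero => intro g; simp [sumG, tailW]
  | succ n ih => intro g; simp [sumG, ih, epsG, List.replicate_succ]

theorem sumG_succ_eq (y : R) (e n : ℕ) : ∀ g : List Layer → R,
    sumG y (e + 1) n g = ∑ j ∈ Finset.range (n + 1),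
      y ^ j * g (List.replicate (n - j) (1, 0) ++ (2, 1) :: tailW j e) := by
  induction n with
  | zero => intro g; simp [sumG, tailW_zero_succ]
  | succ n ih =>
    intro g
    rw [Finset.sum_range_succ]
    simp only [sumG, ih, epsG]
    simp only [Nat.sub_self, List.replicate_zero, List.nil_append, add_left_inj]
    refine Finset.sum_congr rfl fun j hj => ?_
    have : n + 1 - j = (n - j) + 1 := by
      have := Finset.mem_range.1 hj
      omega
    rw [this, List.replicate_succ, List.cons_append]

/-- The context `t h^j t^m` -/
def ctxW (j m : ℕ) : List Layer :=
  (1, 1) :: (List.replicate j ((2, 1) : Layer) ++ List.replicate m ((1, 1) : Layer))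

/-- The boundary functions. -/
def bW (W : List Layer → List Layer → R) (z : R) (k₀ k₁ : ℕ) : ℕ → R
  | 0 => W (ozs k₀ []) (List.replicate k₁ (1, 0))
  | m + 1 => ∑ j ∈ Finset.range (k₀ + 1),
      z ^ j * W (ozs (k₀ - j) (ctxW j m)) (List.replicate k₁ (1, 0))

theorem bW_shift (W : List Layer → List Layer → R) (y : R) (k₀ k₁ k₂ : ℕ) :
    bW (shiftW W) y k₁ k₂ k₀ = sumG y k₀ k₁ (W (List.replicate k₂ (1, 1))) := by
  cases k₀ with
  | zero => simp [bW, sumG_zero_eq, shiftW, ozs, tau]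
  | succ m => simp [bW, sumG_succ_eq, shiftW, ozs, tau, ctxW, tailW]

theorem Good.b_zero (W : List Layer → List Layer → R) (z y : R) (k₁ k₂ : ℕ) :
    bW W z 0 k₁ k₂ = bW (shiftW W) y k₁ k₂ 0 := by
  rw [bW_shift, sumG_zero_eq]
  cases k₂ <;> simp [bW, ozs, ctxW, List.replicate_succ]

theorem Good.b_succ (h : Good W z₁ z₂ q) (k₀ k₁ k₂ : ℕ) :
    bW W (z₁ * q) (k₀ + 1) k₁ k₂ - bW W (z₁ * q) k₀ (k₁ + 1) k₂ =
      (z₁ * q) ^ (k₀ + 1) * bW (shiftW W) (z₂ * q) k₁ k₂ (k₀ + 1) := by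
  rw [bW_shift]
  cases k₂ with
  | zero =>
    have h1 := h.dagger k₀ k₁ []
    simp only [sumP, plusFst, sumG_zero_fun] at h1
    simp only [sumG_zero_eq] at h1
    simpa [bW] using h1
  | succ m =>
    simp only [bW]
    rw [Finset.sum_range_succ, add_sub_right_comm, ← Finset.sum_sub_distrib]
    have key : ∀ j ∈ Finset.range (k₀ + 1),
        (z₁ * q) ^ j * W (ozs (k₀ + 1 - j) (ctxW j m)) (List.replicate k₁ (1, 0)) -
        (z₁ * q) ^ j * W (ozs (k₀ - j) (ctxW j m)) (List.replicate (k₁ + 1) (1, 0)) =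
        (z₁ * q) ^ (k₀ + 1) * (sumG (z₂ * q) (k₀ + 1 - j) k₁ (W (ctxW j m)) -
          sumG (z₂ * q) (k₀ + 1 - (j + 1)) k₁ (W (ctxW (j + 1) m))) := by
      intro j hj
      obtain ⟨a, rfl⟩ : ∃ a, k₀ = a + j := ⟨k₀ - j, by
        have := Finset.mem_range.1 hj
        omega⟩
      have h1 := h.dagger a k₁ (ctxW j m)
      have h2 : sumP W (z₂ * q) a k₁ (ctxW j m) = sumG (z₂ * q) a k₁ (W (ctxW (j + 1) m)) := by
        simp only [ctxW, h.sumP_cons]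
        simp [List.replicate_succ]
      rw [h2] at h1
      rw [show a + j + 1 - j = a + 1 by omega, show a + j - j = a by omega,
        show a + j + 1 - (j + 1) = a by omega]
      simp only [sumG_zero_eq] at h1
      linear_combination (z₁ * q) ^ j * h1
    rw [Finset.sum_congr rfl key, ← Finset.mul_sum, Finset.sum_range_sub'
      (fun j => sumG (z₂ * q) (k₀ + 1 - j) k₁ (W (ctxW j m)))]
    simp only [Nat.sub_self, Nat.sub_zero, sumG_zero_eq]
    have e0 : ctxW 0 m = List.replicate (m + 1) (1, 1) := by simp [ctxW, List.replicate_succ]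
    rw [e0]
    simp [ozs]
    ring

theorem Good.b_rec (h : Good W z₁ z₂ q) (k₂ : ℕ) (k₀ : ℕ) : ∀ k₁ : ℕ,
    bW W (z₁ * q) k₀ k₁ k₂ = ∑ j ∈ Finset.range (k₀ + 1),
      (z₁ * q) ^ j * bW (shiftW W) (z₂ * q) (k₁ + k₀ - j) k₂ j := by
  induction k₀ with
  | zero => intro k₁; simp [Good.b_zero W (z₁ * q) (z₂ * q)]
  | succ n ih =>
    intro k₁
    have h1 := h.b_succ n k₁ k₂
    rw [Finset.sum_range_succ, ← sub_eq_iff_eq_add']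
    have h2 := ih (k₁ + 1)
    rw [show k₁ + 1 + n = k₁ + (n + 1) by ring] at h2
    rw [← h2, show k₁ + (n + 1) - (n + 1) = k₁ by omega]
    exact h1

end WordCalculus

section GenFun

/-- Generating function of a weight function. -/
noncomputable def gf {α : Type*} (wt : α → (Fin 3 →₀ ℕ)) : MvPowerSeries (Fin 3) ℤ :=
  fun n => (Nat.card {a // wt a = n} : ℤ)

theorem coeff_gf {α : Type*} (wt : α → (Fin 3 →₀ ℕ)) (n : Fin 3 →₀ ℕ) :
    MvPowerSeries.coeff n (gf wt) = (Nat.card {a // wt a = n} : ℤ) := rfl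

theorem gf_equiv {α β : Type*} (e : α ≃ β) (w : α → (Fin 3 →₀ ℕ)) (w' : β → (Fin 3 →₀ ℕ))
    (h : ∀ a, w' (e a) = w a) : gf w = gf w' := by
  ext n
  rw [coeff_gf, coeff_gf]
  congr 1
  exact Nat.card_congr (e.subtypeEquiv fun a => by rw [h])

theorem gf_sum {α β : Type*} (w : α → (Fin 3 →₀ ℕ)) (w' : β → (Fin 3 →₀ ℕ))
    (h : ∀ n, Finite {a // w a = n}) (h' : ∀ n, Finite {a // w' a = n}) :
    gf (Sum.elim w w') = gf w + gf w' := by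
  ext n
  have := h n
  have := h' n
  rw [map_add, coeff_gf, coeff_gf, coeff_gf, ← Nat.cast_add, ← Nat.card_sum]
  congr 1
  exact Nat.card_congr Equiv.subtypeSum

theorem gf_sigma {N : ℕ} {α : Fin N → Type*} (w : ∀ i, α i → (Fin 3 →₀ ℕ))
    (h : ∀ i n, Finite {a // w i a = n}) :
    gf (fun x : Σ i, α i => w x.1 x.2) = ∑ i, gf (w i) := by
  ext n
  have := fun i => h i n
  rw [map_sum]
  simp only [coeff_gf]
  rw [← Nat.cast_sum, ← Nat.card_sigma]
  congr 1
  refine Nat.card_congr ⟨fun x => ⟨x.1.1, x.1.2, x.2⟩, fun x => ⟨⟨x.1, x.2.1⟩, x.2.2⟩,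
    fun x => rfl, fun x => rfl⟩

theorem gf_shift {α : Type*} (m : Fin 3 →₀ ℕ) (w : α → (Fin 3 →₀ ℕ)) :
    gf (fun a => m + w a) = MvPowerSeries.monomial m 1 * gf w := by
  ext n
  rw [MvPowerSeries.coeff_monomial_mul]
  simp only [coeff_gf, one_mul]
  split_ifs with hm
  · congr 1
    refine Nat.card_congr (Equiv.subtypeEquivRight fun a => ?_)
    constructor
    · rintro rfl; simp
    · intro h; rw [h]; exact add_tsub_cancel_of_le hm
  · have : IsEmpty {a // m + w a = n} := ⟨fun a => hm (by rw [← a.2]; exact le_self_add)⟩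
    simp

theorem finite_shift {α : Type*} (m : Fin 3 →₀ ℕ) (w : α → (Fin 3 →₀ ℕ))
    (h : ∀ n, Finite {a // w a = n}) (n : Fin 3 →₀ ℕ) : Finite {a // m + w a = n} := by
  have := h (n - m)
  have hh : ∀ a : {a // m + w a = n}, w a.1 = n - m := by
    rintro ⟨a, rfl⟩
    simp
  exact Finite.of_injective (fun a => (⟨a.1, hh a⟩ : {a // w a = n - m}))
    fun a b h => by simpa [Subtype.ext_iff] using h

end GenFun

section Fermionic

/-- The quadratic form. -/
def quadM {k : ℕ} (M : Fin k → ℕ) : ℕ :=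
  ∑ j : Fin k, ∑ j' : Fin k, min ((j : ℕ) + 1) ((j' : ℕ) + 1) * M j * M j'

/-- The mixed form. -/
def crossM {k : ℕ} (M N : Fin k → ℕ) : ℕ :=
  ∑ j : Fin k, ∑ j' : Fin k, (((j : ℕ) + 1) + ((j' : ℕ) + 1) - k) * M j * N j'

/-- The charge. -/
def chargeM {k : ℕ} (M : Fin k → ℕ) : ℕ := ∑ j : Fin k, ((j : ℕ) + 1) * M j

/-- The linear form. -/
def linM {k : ℕ} (L : ℕ → ℕ) (M : Fin k → ℕ) : ℕ := ∑ j : Fin k, L j * M j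

/-- Pairs of tuples of padded partitions. -/
abbrev Pads (k : ℕ) := (Fin k → Multiset ℕ) × (Fin k → Multiset ℕ)

/-- Cardinalities. -/
def cardP {k : ℕ} (P : Fin k → Multiset ℕ) (j : Fin k) : ℕ := Multiset.card (P j)

/-- Total sum. -/
def sizeP {k : ℕ} (P : Fin k → Multiset ℕ) : ℕ := ∑ j, (P j).sum

/-- The energy -/
def energy {k : ℕ} (L₁ L₂ : ℕ → ℕ) (P : Pads k) : ℕ :=
  sizeP P.1 + sizeP P.2 + quadM (cardP P.1) + quadM (cardP P.2) + crossM (cardP P.1) (cardP P.2)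
    + linM L₁ (cardP P.1) + linM L₂ (cardP P.2)

/-- The weight. -/
noncomputable def wtF {k : ℕ} (x₁ x₂ : Fin 3) (L₁ L₂ : ℕ → ℕ) (P : Pads k) : Fin 3 →₀ ℕ :=
  Finsupp.single x₁ (chargeM (cardP P.1)) + Finsupp.single x₂ (chargeM (cardP P.2))
    + Finsupp.single 2 (energy L₁ L₂ P)

/-- The fermionic generating function. -/
noncomputable def Fk (k : ℕ) (x₁ x₂ : Fin 3) (L₁ L₂ : ℕ → ℕ) : MvPowerSeries (Fin 3) ℤ :=
  gf (wtF (k := k) x₁ x₂ L₁ L₂)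

theorem crossM_comm {k : ℕ} (M N : Fin k → ℕ) : crossM M N = crossM N M := by
  unfold crossM
  rw [Finset.sum_comm]
  refine Finset.sum_congr rfl fun i _ => Finset.sum_congr rfl fun j _ => ?_
  rw [add_comm ((j : ℕ) + 1)]; ring

theorem Fk_swap (k : ℕ) (x₁ x₂ : Fin 3) (L₁ L₂ : ℕ → ℕ) :
    Fk k x₁ x₂ L₁ L₂ = Fk k x₂ x₁ L₂ L₁ := by
  refine gf_equiv (Equiv.prodComm _ _) _ _ fun P => ?_
  simp only [wtF, energy, Equiv.prodComm_apply, Prod.fst_swap, Prod.snd_swap]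
  rw [crossM_comm]
  congr 1
  · rw [add_comm]
  · congr 1; ring

theorem Fk_congr (k : ℕ) (x₁ x₂ : Fin 3) {L₁ L₂ L₁' L₂' : ℕ → ℕ}
    (h₁ : ∀ c < k, L₁ c = L₁' c) (h₂ : ∀ c < k, L₂ c = L₂' c) :
    Fk k x₁ x₂ L₁ L₂ = Fk k x₁ x₂ L₁' L₂' := by
  unfold Fk
  congr 1
  funext P
  have e1 : linM L₁ (cardP P.1) = linM L₁' (cardP P.1) :=
    Finset.sum_congr rfl fun j _ => by rw [h₁ j j.2]
  have e2 : linM L₂ (cardP P.2) = linM L₂' (cardP P.2) :=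
    Finset.sum_congr rfl fun j _ => by rw [h₂ j j.2]
  simp only [wtF, energy, e1, e2]

theorem card_le_chargeM {k : ℕ} (M : Fin k → ℕ) (j : Fin k) : M j ≤ chargeM M := by
  refine le_trans ?_ (Finset.single_le_sum (f := fun j : Fin k => ((j : ℕ) + 1) * M j)
    (fun _ _ => Nat.zero_le _) (Finset.mem_univ j))
  exact Nat.le_mul_of_pos_left _ (Nat.succ_pos _)

theorem mem_le_sizeP {k : ℕ} (P : Fin k → Multiset ℕ) (j : Fin k) (a : ℕ) (h : a ∈ P j) :
    a ≤ sizeP P :=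
  (Multiset.le_sum_of_mem h).trans
    (Finset.single_le_sum (f := fun j => (P j).sum) (fun _ _ => Nat.zero_le _) (Finset.mem_univ j))

theorem pads_bound {k : ℕ} (P : Fin k → Multiset ℕ) (N : ℕ) (h1 : chargeM (cardP P) ≤ N)
    (h2 : sizeP P ≤ N) (j : Fin k) : P j ≤ N • Multiset.range (N + 1) := by
  rw [Multiset.le_iff_count]
  intro a
  by_cases ha : a ∈ P j
  · have : a < N + 1 := Nat.lt_succ_of_le ((mem_le_sizeP P j a ha).trans h2)
    rw [Multiset.count_nsmul, Multiset.count_eq_one_of_mem (Multiset.nodup_range _)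
      (Multiset.mem_range.2 this), mul_one]
    exact (Multiset.count_le_card _ _).trans ((card_le_chargeM (cardP P) j).trans h1)
  · rw [Multiset.count_eq_zero_of_notMem ha]; exact Nat.zero_le _

theorem wtF_finite {k : ℕ} (x₁ x₂ : Fin 3) (L₁ L₂ : ℕ → ℕ) (n : Fin 3 →₀ ℕ) :
    Finite {P : Pads k // wtF x₁ x₂ L₁ L₂ P = n} := by
  let B : Fin k → Multiset ℕ :=
    fun _ => (n x₁ + n x₂ + n 2) • Multiset.range (n x₁ + n x₂ + n 2 + 1)
  have hfin : (Set.Iic B).Finite :=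
    (Set.Finite.pi' (t := fun _ => Set.Iic
      ((n x₁ + n x₂ + n 2) • Multiset.range (n x₁ + n x₂ + n 2 + 1)))
      (fun _ => Set.finite_Iic _)).subset fun P hP j => hP j
  refine Set.Finite.subset (hfin.prod hfin) ?_
  intro P (hP : _ = _)
  have h0 : chargeM (cardP P.1) ≤ n x₁ := by
    rw [← hP]; simp only [wtF, Finsupp.add_apply, Finsupp.single_eq_same]; omega
  have h1 : chargeM (cardP P.2) ≤ n x₂ := by
    rw [← hP]; simp only [wtF, Finsupp.add_apply, Finsupp.single_eq_same]; omega
  have h2 : energy L₁ L₂ P ≤ n 2 := by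
    rw [← hP]; simp only [wtF, Finsupp.add_apply, Finsupp.single_eq_same]; omega
  unfold energy at h2
  refine ⟨?_, ?_⟩
  · exact pads_bound _ _ (by omega) (by omega)
  · exact pads_bound _ _ (by omega) (by omega)

/-- Add one to every part at position `c`, or add a zero part. -/
def padMap {k : ℕ} (c : Fin k) : Pads k ⊕ Pads k → Pads k
  | Sum.inl P => (Function.update P.1 c ((P.1 c).map Nat.succ), P.2)
  | Sum.inr P => (Function.update P.1 c (0 ::ₘ P.1 c), P.2)

theorem update_inj_of {ι β : Type*} [DecidableEq ι] (c : ι) (f : β → β) (hf : Function.Injective f)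
    (P P' : ι → β) (h : Function.update P c (f (P c)) = Function.update P' c (f (P' c))) :
    P = P' := by
  funext j
  have := congrFun h j
  by_cases hj : j = c
  · subst hj; simpa using hf (by simpa using this)
  · simpa [hj] using this

theorem zero_notMem_succ (m : Multiset ℕ) : 0 ∉ m.map Nat.succ := by simp

theorem padMap_bijective {k : ℕ} (c : Fin k) : Function.Bijective (padMap c) := by
  constructor
  · rintro (P | P) (P' | P') h
    · simp only [padMap, Prod.mk.injEq] at h
      rw [Sum.inl.injEq]
      exact Prod.ext (update_inj_of c _ (Multiset.map_injective Nat.succ_injective) _ _ h.1) h.2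
    · simp only [padMap, Prod.mk.injEq] at h
      have := congrFun h.1 c
      simp only [Function.update_self] at this
      exact absurd (this ▸ Multiset.mem_cons_self 0 _) (zero_notMem_succ (P.1 c))
    · simp only [padMap, Prod.mk.injEq] at h
      have := congrFun h.1 c
      simp only [Function.update_self] at this
      exact absurd (this ▸ Multiset.mem_cons_self 0 _) (zero_notMem_succ (P'.1 c))
    · simp only [padMap, Prod.mk.injEq] at h
      rw [Sum.inr.injEq]
      exact Prod.ext (update_inj_of c (fun m => 0 ::ₘ m) (fun a b h => by simpa using h) _ _ h.1) h.2
  · intro P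
    by_cases h0 : 0 ∈ P.1 c
    · refine ⟨Sum.inr (Function.update P.1 c ((P.1 c).erase 0), P.2), ?_⟩
      simp [padMap, Multiset.cons_erase h0]
    · refine ⟨Sum.inl (Function.update P.1 c ((P.1 c).map Nat.pred), P.2), ?_⟩
      have : ((P.1 c).map Nat.pred).map Nat.succ = P.1 c := by
        rw [Multiset.map_map]
        conv_rhs => rw [← Multiset.map_id (P.1 c)]
        refine Multiset.map_congr rfl fun a ha => ?_
        exact Nat.succ_pred (fun h => h0 (h ▸ ha))
      simp only [padMap, Function.update_self, this, Function.update_idem, Function.update_eq_self]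

theorem chargeM_add {k : ℕ} (M : Fin k → ℕ) (c : Fin k) :
    chargeM (M + Pi.single c 1) = (c + 1) + chargeM M := by
  simp [chargeM, mul_add, Finset.sum_add_distrib, Pi.single_apply]
  ring

theorem linM_add {k : ℕ} (L : ℕ → ℕ) (M : Fin k → ℕ) (c : Fin k) :
    linM L (M + Pi.single c 1) = L c + linM L M := by
  simp [linM, mul_add, Finset.sum_add_distrib, Pi.single_apply]
  ring

theorem linM_add_left {k : ℕ} (L L' : ℕ → ℕ) (M : Fin k → ℕ) :
    linM (fun j => L j + L' j) M = linM L M + linM L' M := by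
  simp [linM, add_mul, Finset.sum_add_distrib]

theorem quadM_add {k : ℕ} (M : Fin k → ℕ) (c : Fin k) :
    quadM (M + Pi.single c 1) = (c + 1) + linM (fun j => 2 * min ((c : ℕ) + 1) (j + 1)) M
      + quadM M := by
  have h : ∀ j : Fin k, min ((j : ℕ) + 1) ((c : ℕ) + 1) = min ((c : ℕ) + 1) ((j : ℕ) + 1) :=
    fun j => min_comm _ _
  simp only [quadM, linM, Pi.add_apply, mul_add, add_mul, Finset.sum_add_distrib, Pi.single_apply,
    mul_ite, mul_one, mul_zero, ite_mul, zero_mul, Finset.sum_ite_eq', Finset.mem_univ, if_true,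
    Finset.sum_ite_irrel, Finset.sum_const_zero, mul_assoc, h, min_self, ← Finset.mul_sum]
  ring

theorem crossM_add {k : ℕ} (M N : Fin k → ℕ) (c : Fin k) :
    crossM (M + Pi.single c 1) N = linM (fun j => ((c : ℕ) + 1) + (j + 1) - k) N
      + crossM M N := by
  simp only [crossM, linM, Pi.add_apply, mul_add, add_mul, Finset.sum_add_distrib, Pi.single_apply,
    mul_ite, mul_one, mul_zero, ite_mul, zero_mul, Finset.sum_ite_eq', Finset.mem_univ, if_true,
    Finset.sum_ite_irrel, Finset.sum_const_zero]
  ring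

theorem Fk_rec (k : ℕ) (x₁ x₂ : Fin 3) (L₁ L₂ : ℕ → ℕ) (c : ℕ) (hc : c < k) :
    Fk k x₁ x₂ L₁ L₂ = Fk k x₁ x₂ (fun j => L₁ j + if j = c then 1 else 0) L₂
      + MvPowerSeries.monomial (Finsupp.single x₁ (c + 1) + Finsupp.single 2 (c + 1 + L₁ c)) 1 *
        Fk k x₁ x₂ (fun j => L₁ j + 2 * min (c + 1) (j + 1))
          (fun j => L₂ j + ((c + 1) + (j + 1) - k)) := by
  unfold Fk
  rw [← gf_shift, ← gf_sum _ _ (wtF_finite _ _ _ _)]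
  · symm
    refine gf_equiv (Equiv.ofBijective _ (padMap_bijective ⟨c, hc⟩)) _ _ ?_
    rintro (P | P)
    · have h1 : cardP (Function.update P.1 ⟨c, hc⟩ ((P.1 ⟨c, hc⟩).map Nat.succ)) = cardP P.1 := by
        funext j
        by_cases hj : j = ⟨c, hc⟩
        · subst hj; simp [cardP]
        · simp [cardP, hj]
      have h2 : sizeP (Function.update P.1 ⟨c, hc⟩ ((P.1 ⟨c, hc⟩).map Nat.succ)) =
          sizeP P.1 + linM (fun j => if j = c then 1 else 0) (cardP P.1) := by
        unfold sizeP linM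
        rw [← Finset.sum_add_distrib]
        refine Finset.sum_congr rfl fun j _ => ?_
        by_cases hj : j = ⟨c, hc⟩
        · subst hj; simp [cardP, Multiset.sum_map_add]
        · have : (j : ℕ) ≠ c := fun h => hj (Fin.ext h)
          simp [hj, this]
      simp only [Equiv.ofBijective_apply, padMap, wtF, energy, h1, h2, Sum.elim_inl, linM_add_left]
      congr 2
      ring
    · have h1 : cardP (Function.update P.1 ⟨c, hc⟩ (0 ::ₘ P.1 ⟨c, hc⟩)) =
          cardP P.1 + Pi.single ⟨c, hc⟩ 1 := by
        funext j
        by_cases hj : j = ⟨c, hc⟩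
        · subst hj; simp [cardP]
        · simp [cardP, hj]
      have h2 : sizeP (Function.update P.1 ⟨c, hc⟩ (0 ::ₘ P.1 ⟨c, hc⟩)) = sizeP P.1 := by
        unfold sizeP
        refine Finset.sum_congr rfl fun j _ => ?_
        by_cases hj : j = ⟨c, hc⟩
        · subst hj; simp
        · simp [hj]
      simp only [Equiv.ofBijective_apply, padMap, wtF, energy, h1, h2, Sum.elim_inr, linM_add_left,
        chargeM_add, quadM_add, crossM_add, linM_add, Finsupp.single_add]
      abel
  · exact finite_shift _ _ (wtF_finite _ _ _ _)

end Fermionic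

section FermionicWords

/-- Partial sums. -/
def psum (w : List ℕ) (c : ℕ) : ℕ := (w.take (c + 1)).sum

theorem psum_lt (x v : List ℕ) (b c : ℕ) (h : c < x.length) :
    psum (x ++ b :: v) c = psum x c := by
  unfold psum
  rw [List.take_append_of_le_length (by omega)]

theorem psum_ge (x v : List ℕ) (b c : ℕ) (h : x.length ≤ c) :
    psum (x ++ b :: v) c = x.sum + b + (v.take (c - x.length)).sum := by
  unfold psum
  rw [List.take_append, List.take_of_length_le (by omega),
    show c + 1 - x.length = c - x.length + 1 by omega]
  simp [add_assoc]

/-- The value on the word `u.reverse ++ v`. -/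
noncomputable def Wx (x₁ x₂ : Fin 3) (u v : List Layer) : MvPowerSeries (Fin 3) ℤ :=
  Fk (u.length + v.length) x₁ x₂ (psum ((u.map Prod.fst).reverse ++ v.map Prod.fst))
    (psum ((v.map Prod.snd).reverse ++ u.map Prod.snd))

theorem Wx_eq (x₁ x₂ : Fin 3) (u v : List Layer) (k : ℕ) (hk : u.length + v.length = k) :
    Wx x₁ x₂ u v = Fk k x₁ x₂ (psum ((u.map Prod.fst).reverse ++ v.map Prod.fst))
    (psum ((v.map Prod.snd).reverse ++ u.map Prod.snd)) := by
  subst hk; rfl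

theorem Wx_swap (x₁ x₂ : Fin 3) (u v : List Layer) :
    Wx x₁ x₂ u v = Wx x₂ x₁ (v.map Prod.swap) (u.map Prod.swap) := by
  rw [Wx_eq x₂ x₁ _ _ (u.length + v.length) (by simp [add_comm]), Wx, Fk_swap]
  simp [Function.comp_def]

theorem Wx_relX (x₁ x₂ : Fin 3) (u : List Layer) (l l' : ℕ) (v v' : List Layer)
    (hv : DecFst v v') :
    Wx x₁ x₂ u ((l, l') :: v) - Wx x₁ x₂ u ((l + 1, l') :: v') =
      MvPowerSeries.monomial (Finsupp.single x₁ 1) 1 *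
      MvPowerSeries.monomial (Finsupp.single 2 1) 1 ^ (1 + l) *
        (Wx x₁ x₂ u ((l + 2, l' + 1) :: v) - plusFst (Wx x₁ x₂) u ((l + 1, l' + 1) :: v)) := by
  have hlen : v'.length = v.length := by cases hv <;> simp
  have hsnd : v'.map Prod.snd = v.map Prod.snd := by cases hv <;> simp
  have hdec : ∀ n < v.length + 1,
      (l + 1) + ((v'.map Prod.fst).take n).sum =
        l + ((v.map Prod.fst).take n).sum + if n = 0 then 1 else 0 := by
    intro n hn
    cases hv with
    | nil => simp at hn; simp [hn]
    | cons m m' v =>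
      cases n with
      | zero => simp
      | succ n => simp; ring
  have h1 := Fk_rec (u.length + (v.length + 1)) x₁ x₂
    (psum ((u.map Prod.fst).reverse ++ l :: v.map Prod.fst))
    (psum ((v.map Prod.snd).reverse ++ l' :: u.map Prod.snd)) u.length (by omega)
  have e1 := Wx_eq x₁ x₂ u ((l, l') :: v) (u.length + (v.length + 1)) (by simp)
  have e2 := Wx_eq x₁ x₂ u ((l + 1, l') :: v') (u.length + (v.length + 1)) (by simp [hlen])
  have e3 := Wx_eq x₁ x₂ u ((l + 2, l' + 1) :: v) (u.length + (v.length + 1)) (by simp)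
  simp only [List.map_cons, List.reverse_cons, List.append_assoc, List.singleton_append, hsnd]
    at e1 e2 e3
  rw [← e1] at h1
  have e2' : Wx x₁ x₂ u ((l + 1, l') :: v') = Fk (u.length + (v.length + 1)) x₁ x₂
      (fun j => psum ((u.map Prod.fst).reverse ++ l :: v.map Prod.fst) j +
        if j = u.length then 1 else 0)
      (psum ((v.map Prod.snd).reverse ++ l' :: u.map Prod.snd)) := by
    rw [e2]
    refine Fk_congr _ _ _ (fun c hc => ?_) (fun c hc => rfl)
    rcases lt_or_ge c u.length with h | h
    · rw [psum_lt _ _ _ _ (by simpa using h), psum_lt _ _ _ _ (by simpa using h), if_neg (by omega)]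
      simp
    · rw [psum_ge _ _ _ _ (by simpa using h), psum_ge _ _ _ _ (by simpa using h)]
      have := hdec (c - u.length) (by omega)
      simp only [List.length_reverse, List.length_map]
      rw [add_assoc, this]
      split_ifs <;> omega
  rw [← e2'] at h1
  rw [sub_eq_iff_eq_add', h1, add_right_inj]
  cases u with
  | nil =>
    simp only [plusFst, sub_zero]
    rw [e3, MvPowerSeries.monomial_pow, MvPowerSeries.monomial_mul_monomial]
    refine congrArg₂ (· * ·) ?_ ?_
    · simp [psum]
    · refine Fk_congr _ _ _ (fun c hc => ?_) (fun c hc => ?_)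
      · simp [psum]; ring
      · rcases lt_or_ge c v.length with h | h
        · rw [psum_lt _ _ _ _ (by simpa using h), psum_lt _ _ _ _ (by simpa using h)]
          simp; omega
        · rw [psum_ge _ _ _ _ (by simpa using h), psum_ge _ _ _ _ (by simpa using h)]
          simp at hc ⊢; omega
  | cons a u =>
    obtain ⟨a, a'⟩ := a
    simp only [plusFst]
    have h2 := Fk_rec (u.length + 1 + (v.length + 1)) x₁ x₂
      (psum ((((a, a') :: u).map Prod.fst).reverse ++ (l + 2) :: v.map Prod.fst))
      (psum ((v.map Prod.snd).reverse ++ (l' + 1) :: ((a, a') :: u).map Prod.snd))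
      u.length (by omega)
    simp only [List.map_cons, List.length_cons] at e3 h2
    rw [← e3] at h2
    have e4 := Wx_eq x₁ x₂ ((a + 1, a') :: u) ((l + 1, l' + 1) :: v)
      (u.length + 1 + (v.length + 1)) (by simp)
    have e4' : Wx x₁ x₂ ((a + 1, a') :: u) ((l + 1, l' + 1) :: v) =
        Fk (u.length + 1 + (v.length + 1)) x₁ x₂
        (fun j => psum ((a :: u.map Prod.fst).reverse ++ (l + 2) :: v.map Prod.fst) j +
          if j = u.length then 1 else 0)
        (psum ((v.map Prod.snd).reverse ++ (l' + 1) :: a' :: u.map Prod.snd)) := by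
      rw [e4]
      refine Fk_congr _ _ _ (fun c hc => ?_) (fun c hc => by simp)
      simp only [List.map_cons]
      rcases lt_or_ge c (u.length + 1) with h | h
      · rw [psum_lt _ _ _ _ (by simpa using h), psum_lt _ _ _ _ (by simpa using h)]
        rcases lt_or_ge c u.length with h' | h'
        · rw [List.reverse_cons, List.reverse_cons, psum_lt _ _ _ _ (by simpa using h'),
            psum_lt _ _ _ _ (by simpa using h'), if_neg (by omega)]
          simp
        · rw [List.reverse_cons, List.reverse_cons, psum_ge _ _ _ _ (by simpa using h'),
            psum_ge _ _ _ _ (by simpa using h'), if_pos (by omega)]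
          simp; omega
      · rw [psum_ge _ _ _ _ (by simpa using h), psum_ge _ _ _ _ (by simpa using h),
          if_neg (by omega)]
        simp; omega
    rw [← e4'] at h2
    rw [h2, add_sub_cancel_left, MvPowerSeries.monomial_pow, MvPowerSeries.monomial_mul_monomial,
      ← mul_assoc, MvPowerSeries.monomial_mul_monomial]
    have p1 : psum ((a :: u.map Prod.fst).reverse ++ l :: v.map Prod.fst) (u.length + 1) =
        psum ((a :: u.map Prod.fst).reverse ++ (l + 2) :: v.map Prod.fst) u.length + l := by
      rw [psum_ge _ _ _ _ (by simp), psum_lt _ _ _ _ (by simp), List.reverse_cons,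
        psum_ge _ _ _ _ (by simp)]
      simp
    refine congrArg₂ (· * ·) ?_ ?_
    · simp only [one_pow, mul_one, List.map_cons, List.length_cons, p1]
      refine congrArg (fun m => MvPowerSeries.monomial m (1 : ℤ)) ?_
      ext i
      simp only [Finsupp.add_apply, Finsupp.smul_apply, Finsupp.single_apply, smul_eq_mul]
      split_ifs <;> ring
    · refine Fk_congr _ _ _ (fun c hc => ?_) (fun c hc => ?_)
      · simp only [List.map_cons, List.length_cons]
        rcases lt_or_ge c (u.length + 1) with h | h
        · rw [psum_lt _ _ _ _ (by simpa using h), psum_lt _ _ _ _ (by simpa using h)]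
          omega
        · rw [psum_ge _ _ _ _ (by simpa using h), psum_ge _ _ _ _ (by simpa using h)]
          omega
      · simp only [List.map_cons, List.length_cons]
        rcases lt_or_ge c v.length with h | h
        · rw [psum_lt _ _ _ _ (by simpa using h), psum_lt _ _ _ _ (by simpa using h)]
          omega
        · rw [psum_ge _ _ _ _ (by simpa using h), psum_ge _ _ _ _ (by simpa using h)]
          omega

theorem plusFst_swap (x₁ x₂ : Fin 3) (u v : List Layer) :
    plusFst (Wx x₁ x₂) (v.map Prod.swap) (u.map Prod.swap) = plusSnd (Wx x₂ x₁) u v := by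
  cases v with
  | nil => simp [plusFst, plusSnd]
  | cons b v => simp [plusFst, plusSnd, Wx_swap x₂ x₁]

theorem Wx_good : Good (Wx 0 1) (MvPowerSeries.monomial (Finsupp.single 0 1) 1)
    (MvPowerSeries.monomial (Finsupp.single 1 1) 1)
    (MvPowerSeries.monomial (Finsupp.single 2 1) 1) where
  zip a u v := by
    rw [Wx_eq 0 1 u (a :: v) ((a :: u).length + v.length) (by simp; ring), Wx]
    simp
  relX u l l' v v' h := Wx_relX 0 1 u l l' v v' h
  relY v l l' u u' h := by
    have hd : DecFst (u.map Prod.swap) (u'.map Prod.swap) := by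
      cases h with
      | nil => exact DecFst.nil
      | cons m m' v => exact DecFst.cons _ _ _
    have h1 := Wx_relX 1 0 (v.map Prod.swap) l' l _ _ hd
    have h2 := plusFst_swap 1 0 ((l + 1, l' + 1) :: u) v
    rw [Wx_swap 0 1, Wx_swap 0 1 ((l, l' + 1) :: u'), Wx_swap 0 1 ((l + 1, l' + 2) :: u), ← h2]
    exact h1

end FermionicWords

section Configs

/-- Charge vector of position `r`, without the last power of `q`. -/
noncomputable def posZ (r : ℕ) : Fin 3 →₀ ℕ :=
  Finsupp.single (if Even r then 0 else 1) 1 + Finsupp.single 2 (r / 2)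

/-- Weight of a particle in position `r`. -/
noncomputable def posw (r : ℕ) : Fin 3 →₀ ℕ := posZ r + Finsupp.single 2 1

theorem posw_two (r : ℕ) : posw r 2 = r / 2 + 1 := by
  simp only [posw, posZ, Finsupp.add_apply, Finsupp.single_eq_same]
  split_ifs <;> simp

theorem posZ_succ_succ (r : ℕ) : posZ (r + 2) = posZ r + Finsupp.single 2 1 := by
  have : Even (r + 2) ↔ Even r := by simp [Nat.even_add]
  simp only [posZ, this, add_assoc, ← Finsupp.single_add]
  congr 3
  omega

/-- The weight of a configuration. -/
noncomputable def wtC (τ : ℕ) (a : ℕ →₀ ℕ) : Fin 3 →₀ ℕ := a.sum fun i v => v • posw (τ + i)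

theorem wtC_apply (τ : ℕ) (a : ℕ →₀ ℕ) (x : Fin 3) :
    wtC τ a x = a.sum fun i v => v * posw (τ + i) x := by
  simp [wtC]

theorem le_wtC_two (τ : ℕ) (a : ℕ →₀ ℕ) (i : ℕ) : a i * ((τ + i) / 2 + 1) ≤ wtC τ a 2 := by
  rw [wtC_apply]
  by_cases h : i ∈ a.support
  · refine le_trans ?_ (Finset.single_le_sum (f := fun i => a i * posw (τ + i) 2)
      (fun _ _ => Nat.zero_le _) h)
    simp [posw_two]
  · simp [Finsupp.notMem_support_iff.1 h]

/-- Configurations with boundary conditions. -/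
def Cfg (k p s : ℕ) : Type :=
  {a : ℕ →₀ ℕ // (∀ i : ℕ, a i + a (i + 1) + a (i + 2) ≤ k) ∧ a 0 ≤ p ∧ a 0 + a 1 ≤ s}

theorem cfg_finite (k p s τ : ℕ) (n : Fin 3 →₀ ℕ) : Finite {a : Cfg k p s // wtC τ a.1 = n} := by
  let B : ℕ →₀ ℕ := Finsupp.indicator (Finset.range (2 * n 2 + 1)) (fun _ _ => n 2)
  have hB : ∀ a : {a : Cfg k p s // wtC τ a.1 = n}, a.1.1 ≤ B := by
    rintro ⟨a, rfl⟩ i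
    have h := le_wtC_two τ a.1 i
    by_cases hi : i ∈ Finset.range (2 * wtC τ a.1 2 + 1)
    · simp only [B, Finsupp.indicator_of_mem hi]
      exact le_trans (Nat.le_mul_of_pos_right _ (Nat.succ_pos _)) h
    · simp only [B, Finsupp.indicator_of_notMem hi]
      rw [Finset.mem_range] at hi
      by_contra hne
      have h0 : 0 < a.1 i := Nat.pos_of_ne_zero fun h => hne (by rw [h])
      have : (τ + i) / 2 + 1 ≤ a.1 i * ((τ + i) / 2 + 1) := Nat.le_mul_of_pos_left _ h0
      omega
  have hf : Finite (Set.Iic B) := Set.finite_Iic B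
  exact Finite.of_injective (fun a => (⟨a.1.1, hB a⟩ : Set.Iic B)) fun a b h => by
    have : a.1.1 = b.1.1 := congrArg (fun x : Set.Iic B => x.1) h
    exact Subtype.ext (Subtype.ext this)

/-- Prepend an entry. -/
noncomputable def consA (j : ℕ) (b : ℕ →₀ ℕ) : ℕ →₀ ℕ :=
  Finsupp.single 0 j + b.mapDomain Nat.succ

theorem consA_zero (j : ℕ) (b : ℕ →₀ ℕ) : consA j b 0 = j := by
  simp only [consA, Finsupp.add_apply, Finsupp.single_eq_same]
  rw [Finsupp.mapDomain_of_notMem_range _ _ (by simp)]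
  rfl

theorem consA_succ (j : ℕ) (b : ℕ →₀ ℕ) (i : ℕ) : consA j b (i + 1) = b i := by
  simp only [consA, Finsupp.add_apply]
  rw [show i + 1 = Nat.succ i from rfl, Finsupp.mapDomain_apply Nat.succ_injective]
  simp

/-- Drop the first entry. -/
noncomputable def tailA (a : ℕ →₀ ℕ) : ℕ →₀ ℕ :=
  a.comapDomain Nat.succ Nat.succ_injective.injOn

theorem tailA_apply (a : ℕ →₀ ℕ) (i : ℕ) : tailA a i = a (i + 1) := rfl

theorem wtC_consA (τ j : ℕ) (b : ℕ →₀ ℕ) :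
    wtC τ (consA j b) = j • posw τ + wtC (τ + 1) b := by
  unfold wtC consA
  rw [Finsupp.sum_add_index' (by simp) (by intros; rw [add_smul]),
    Finsupp.sum_single_index (by simp), Finsupp.sum_mapDomain_index (by simp)
      (by intros; rw [add_smul])]
  simp only [add_zero, Nat.succ_eq_add_one]
  congr 1
  refine Finsupp.sum_congr fun i _ => ?_
  rw [show τ + (i + 1) = τ + 1 + i by ring]

/-- The recursion for configurations. -/
noncomputable def cfgEquiv (k p s : ℕ) (hp : p ≤ s) (hs : s ≤ k) :
    (Σ j : Fin (p + 1), Cfg k (s - j) (k - j)) ≃ Cfg k p s where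
  toFun x := ⟨consA x.1 x.2.1, by
    obtain ⟨j, b, h1, h2, h3⟩ := x
    have := j.2
    refine ⟨fun i => ?_, ?_, ?_⟩
    · cases i with
      | zero =>
        rw [consA_zero, consA_succ, show 0 + 2 = 1 + 1 from rfl, consA_succ]
        simp only at *
        omega
      | succ i =>
        rw [consA_succ, consA_succ, show i + 1 + 2 = (i + 2) + 1 from rfl, consA_succ]
        exact h1 i
    · rw [consA_zero]; simp only; omega
    · have e1 : consA j b 1 = b 0 := consA_succ j b 0
      have e0 : consA j b 0 = j := consA_zero j b
      change consA j b 0 + consA j b 1 ≤ s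
      omega⟩
  invFun a := ⟨⟨a.1 0, by have := a.2.2.1; omega⟩, ⟨tailA a.1, by
    obtain ⟨a, h1, h2, h3⟩ := a
    refine ⟨fun i => h1 (i + 1), ?_, ?_⟩
    · simp only [tailA_apply, zero_add]; omega
    · have := h1 0
      simp only [tailA_apply, zero_add] at this ⊢
      simp only [Nat.reduceAdd]
      omega⟩⟩
  left_inv x := by
    obtain ⟨⟨j, hj⟩, b, hb⟩ := x
    have h0 : consA j b 0 = j := consA_zero j b
    have ht : tailA (consA j b) = b := by
      ext i; rw [tailA_apply, consA_succ]
    refine Sigma.ext (Fin.ext h0) ?_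
    simp only
    congr 1
    · funext a; rw [h0]
    · simp only [ht]
      apply proof_irrel_heq
  right_inv a := by
    apply Subtype.ext
    ext i
    cases i with
    | zero => exact consA_zero _ _
    | succ i => exact consA_succ _ _ _

/-- Generating function of configurations. -/
noncomputable def cG (k τ p s : ℕ) : MvPowerSeries (Fin 3) ℤ :=
  gf (fun a : Cfg k p s => wtC τ a.1)

theorem cG_rec (k τ p s : ℕ) (hp : p ≤ s) (hs : s ≤ k) :
    cG k τ p s = ∑ j ∈ Finset.range (p + 1),
      MvPowerSeries.monomial (j • posw τ) 1 * cG k (τ + 1) (s - j) (k - j) := by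
  rw [Finset.sum_range]
  unfold cG
  simp only [← gf_shift]
  rw [← gf_sigma (w := fun (j : Fin (p + 1)) (a : Cfg k (s - j) (k - j)) =>
    (j : ℕ) • posw τ + wtC (τ + 1) a.1)
    (fun i n => finite_shift _ _ (cfg_finite _ _ _ _) n)]
  symm
  exact gf_equiv (cfgEquiv k p s hp hs) _ _ fun x => wtC_consA _ _ _

theorem gf_delta {α : Type*} (w : α → (Fin 3 →₀ ℕ)) (a₀ : α) (D : ℕ) (h0 : w a₀ = 0)
    (h : ∀ a, a ≠ a₀ → D ≤ w a 2) (n : Fin 3 →₀ ℕ) (hn : n 2 < D) :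
    MvPowerSeries.coeff n (gf w) = if n = 0 then 1 else 0 := by
  rw [coeff_gf]
  have key : ∀ a, w a = n → a = a₀ := by
    intro a ha
    by_contra hne
    have := h a hne
    rw [ha] at this
    omega
  split_ifs with h1
  · subst h1
    have : Unique {a // w a = 0} := ⟨⟨⟨a₀, h0⟩⟩, fun a => Subtype.ext (key a.1 a.2)⟩
    simp
  · have : IsEmpty {a // w a = n} := ⟨fun a => h1 (by
      rw [← a.2, key a.1 a.2, h0])⟩
    simp

theorem cG_delta (k τ p s : ℕ) (n : Fin 3 →₀ ℕ) (hn : n 2 < τ / 2) :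
    MvPowerSeries.coeff n (cG k τ p s) = if n = 0 then 1 else 0 := by
  refine gf_delta _ (⟨0, by simp⟩ : Cfg k p s) (τ / 2) (by simp [wtC]) ?_ n hn
  intro a ha
  have : a.1 ≠ 0 := fun h => ha (Subtype.ext h)
  obtain ⟨i, hi⟩ := Finsupp.ne_iff.1 this
  have h0 : 0 < a.1 i := Nat.pos_of_ne_zero hi
  have h1 := le_wtC_two τ a.1 i
  have : (τ + i) / 2 + 1 ≤ a.1 i * ((τ + i) / 2 + 1) := Nat.le_mul_of_pos_left _ h0
  omega

end Configs

section Compare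

/-- Iterated shifts. -/
noncomputable def WT : ℕ → List Layer → List Layer → MvPowerSeries (Fin 3) ℤ
  | 0 => Wx 0 1
  | τ + 1 => shiftW (WT τ)

theorem WT_good (τ : ℕ) : Good (WT τ) (MvPowerSeries.monomial (posZ τ) 1)
    (MvPowerSeries.monomial (posZ (τ + 1)) 1)
    (MvPowerSeries.monomial (Finsupp.single 2 1) 1) := by
  induction τ with
  | zero => simpa [posZ, WT] using Wx_good
  | succ τ ih =>
    have := ih.shift
    rw [MvPowerSeries.monomial_mul_monomial, ← posZ_succ_succ, one_mul] at this
    exact this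

theorem psum_ge_of (w : List ℕ) (N c : ℕ) (hw : ∀ x ∈ w, N ≤ x) (hc : c < w.length) :
    N ≤ psum w c := by
  cases w with
  | nil => simp at hc
  | cons x w =>
    have := hw x (by simp)
    simp only [psum, List.take_succ_cons, List.sum_cons]
    omega

theorem Wx_delta (u v : List Layer) (N : ℕ) (hu : ∀ a ∈ u, N ≤ a.1 ∧ N ≤ a.2)
    (hv : ∀ a ∈ v, N ≤ a.1 ∧ N ≤ a.2) (n : Fin 3 →₀ ℕ) (hn : n 2 < N) :
    MvPowerSeries.coeff n (Wx 0 1 u v) = if n = 0 then 1 else 0 := by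
  refine gf_delta _ ((fun _ => 0, fun _ => 0) : Pads (u.length + v.length)) N ?_ ?_ n hn
  · have : (cardP (fun _ => 0 : Fin (u.length + v.length) → Multiset ℕ)) = fun _ => 0 := by
      funext j; simp [cardP]
    simp [wtF, energy, this, chargeM, quadM, crossM, linM, sizeP]
  · intro P hP
    have h2 : energy (psum ((u.map Prod.fst).reverse ++ v.map Prod.fst))
      (psum ((v.map Prod.snd).reverse ++ u.map Prod.snd)) P ≤ wtF 0 1
        (psum ((u.map Prod.fst).reverse ++ v.map Prod.fst))
        (psum ((v.map Prod.snd).reverse ++ u.map Prod.snd)) P 2 := by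
      simp [wtF]
    refine le_trans ?_ h2
    unfold energy
    have key : ∀ (L : ℕ → ℕ) (Q : Fin (u.length + v.length) → Multiset ℕ),
        (∀ c < u.length + v.length, N ≤ L c) → Q ≠ (fun _ => 0) → N ≤ linM L (cardP Q) := by
      intro L Q hL hQ
      obtain ⟨j, hj⟩ := Function.ne_iff.1 hQ
      have hc : 0 < cardP Q j := Multiset.card_pos.2 hj
      refine le_trans ?_ (Finset.single_le_sum (f := fun j : Fin _ => L j * cardP Q j)
        (fun _ _ => Nat.zero_le _) (Finset.mem_univ j))
      exact (hL j j.2).trans (Nat.le_mul_of_pos_right _ hc)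
    by_cases h1 : P.1 = fun _ => 0
    · have h3 : P.2 ≠ fun _ => 0 := fun h => hP (Prod.ext h1 h)
      have := key (psum ((v.map Prod.snd).reverse ++ u.map Prod.snd)) P.2 (fun c hc => by
        refine psum_ge_of _ _ _ (fun x hx => ?_) (by simp; omega)
        rw [List.mem_append, List.mem_reverse, List.mem_map, List.mem_map] at hx
        rcases hx with ⟨a, ha, rfl⟩ | ⟨a, ha, rfl⟩
        · exact (hv a ha).2
        · exact (hu a ha).2) h3
      omega
    · have := key (psum ((u.map Prod.fst).reverse ++ v.map Prod.fst)) P.1 (fun c hc => by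
        refine psum_ge_of _ _ _ (fun x hx => ?_) (by simp; omega)
        rw [List.mem_append, List.mem_reverse, List.mem_map, List.mem_map] at hx
        rcases hx with ⟨a, ha, rfl⟩ | ⟨a, ha, rfl⟩
        · exact (hu a ha).1
        · exact (hv a ha).1) h1
      omega

theorem WT_delta_aux (τ : ℕ) : ∀ (s : ℕ) (u v : List Layer),
    (∀ a ∈ u, (s + 1) / 2 ≤ a.1 ∧ s / 2 ≤ a.2) → (∀ a ∈ v, (s + 1) / 2 ≤ a.1 ∧ s / 2 ≤ a.2) →
    ∀ n : Fin 3 →₀ ℕ, n 2 < (s + τ) / 2 →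
      MvPowerSeries.coeff n (WT τ u v) = if n = 0 then 1 else 0 := by
  induction τ with
  | zero =>
    intro s u v hu hv n hn
    refine Wx_delta u v (s / 2) (fun a ha => ?_) (fun a ha => ?_) n (by simpa using hn)
    · have := hu a ha; omega
    · have := hv a ha; omega
  | succ τ ih =>
    intro s u v hu hv n hn
    have ht : ∀ a : Layer, (s + 1) / 2 ≤ a.1 ∧ s / 2 ≤ a.2 →
        (s + 1 + 1) / 2 ≤ (tau a).1 ∧ (s + 1) / 2 ≤ (tau a).2 := by
      intro a ha
      simp only [tau]
      omega
    refine ih (s + 1) (v.map tau) (u.map tau) ?_ ?_ n (by omega)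
    · intro a ha
      obtain ⟨b, hb, rfl⟩ := List.mem_map.1 ha
      exact ht b (hv b hb)
    · intro a ha
      obtain ⟨b, hb, rfl⟩ := List.mem_map.1 ha
      exact ht b (hu b hb)

theorem WT_delta (τ : ℕ) (u v : List Layer) (n : Fin 3 →₀ ℕ) (hn : n 2 < τ / 2) :
    MvPowerSeries.coeff n (WT τ u v) = if n = 0 then 1 else 0 :=
  WT_delta_aux τ 0 u v (by simp) (by simp) n (by simpa using hn)

/-- The boundary functions in terms of `p, s`. -/
noncomputable def bG (k τ p s : ℕ) : MvPowerSeries (Fin 3) ℤ :=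
  bW (WT τ) (MvPowerSeries.monomial (posw τ) 1) p (s - p) (k - s)

theorem bG_rec (k τ p s : ℕ) (hp : p ≤ s) (hs : s ≤ k) :
    bG k τ p s = ∑ j ∈ Finset.range (p + 1),
      MvPowerSeries.monomial (j • posw τ) 1 * bG k (τ + 1) (s - j) (k - j) := by
  have h := (WT_good τ).b_rec (k - s) p (s - p)
  simp only [MvPowerSeries.monomial_mul_monomial, one_mul] at h
  unfold bG
  rw [posw, h]
  refine Finset.sum_congr rfl fun j hj => ?_
  have := Finset.mem_range.1 hj
  rw [MvPowerSeries.monomial_pow, one_pow, show s - p + p - j = s - j by omega,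
    show k - j - (s - j) = k - s by omega, show k - (k - j) = j by omega]
  rfl

theorem bG_delta (k τ p s : ℕ) (n : Fin 3 →₀ ℕ) (hn : n 2 < τ / 2) :
    MvPowerSeries.coeff n (bG k τ p s) = if n = 0 then 1 else 0 := by
  unfold bG
  cases k - s with
  | zero => exact WT_delta τ _ _ n hn
  | succ m =>
    simp only [bW]
    rw [Finset.sum_range_succ', map_add, map_sum, Finset.sum_eq_zero]
    · simp [WT_delta τ _ _ n hn]
    · intro j _
      rw [MvPowerSeries.monomial_pow, MvPowerSeries.coeff_monomial_mul, if_neg]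
      intro h
      have h2 := h 2
      simp only [Finsupp.smul_apply, posw_two, smul_eq_mul, add_mul, one_mul] at h2
      have : 0 ≤ j * (τ / 2 + 1) := Nat.zero_le _
      omega

theorem compare (k m : ℕ) : ∀ (τ p s : ℕ), p ≤ s → s ≤ k → ∀ n : Fin 3 →₀ ℕ,
    2 * n 2 + 2 ≤ τ + m →
      MvPowerSeries.coeff n (cG k τ p s) = MvPowerSeries.coeff n (bG k τ p s) := by
  induction m with
  | zero =>
    intro τ p s hp hs n hn
    rw [cG_delta _ _ _ _ _ (by omega), bG_delta _ _ _ _ _ (by omega)]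
  | succ m ih =>
    intro τ p s hp hs n hn
    rw [cG_rec _ _ _ _ hp hs, bG_rec _ _ _ _ hp hs, map_sum, map_sum]
    refine Finset.sum_congr rfl fun j hj => ?_
    rw [MvPowerSeries.coeff_monomial_mul, MvPowerSeries.coeff_monomial_mul]
    split_ifs with h
    · rw [ih (τ + 1) _ _ (by omega) (by omega)]
      have : (n - j • posw τ) 2 ≤ n 2 := by
        rw [Finsupp.tsub_apply]; exact Nat.sub_le _ _
      omega
    · rfl

theorem compare_zero (k p s : ℕ) (hp : p ≤ s) (hs : s ≤ k) : cG k 0 p s = bG k 0 p s := by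
  ext n
  exact compare k (2 * n 2 + 2) 0 p s hp hs n (by omega)

end Compare

section FinalMatch

/-- Remove the zero parts. -/
def stripZ (m : Multiset ℕ) : Multiset ℕ := m.filter (fun x => 0 < x)

/-- Add zero parts. -/
def padZ (M : ℕ) (l : Multiset ℕ) : Multiset ℕ := l + Multiset.replicate (M - Multiset.card l) 0

theorem strip_add (m : Multiset ℕ) :
    stripZ m + Multiset.replicate (Multiset.card m - Multiset.card (stripZ m)) 0 = m := by
  have h := Multiset.filter_add_not (fun x => 0 < x) m
  have h1 : m.filter (fun x => ¬ 0 < x) =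
      Multiset.replicate (Multiset.card (m.filter (fun x => ¬ 0 < x))) 0 := by
    rw [Multiset.eq_replicate_card]
    intro b hb
    have := (Multiset.mem_filter.1 hb).2
    omega
  have h2 : Multiset.card (m.filter (fun x => ¬ 0 < x)) =
      Multiset.card m - Multiset.card (stripZ m) := by
    have := congrArg Multiset.card h
    rw [Multiset.card_add] at this
    unfold stripZ
    omega
  rw [← h2, ← h1]
  exact h

theorem padZ_sum (M : ℕ) (l : Multiset ℕ) : (padZ M l).sum = l.sum := by simp [padZ]

theorem padZ_card (M : ℕ) (l : Multiset ℕ) (h : Multiset.card l ≤ M) :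
    Multiset.card (padZ M l) = M := by simp [padZ, h]

theorem padZ_strip (m : Multiset ℕ) : padZ (Multiset.card m) (stripZ m) = m := strip_add m

theorem strip_padZ (M : ℕ) (l : Multiset ℕ) (h : ∀ x ∈ l, 0 < x) : stripZ (padZ M l) = l := by
  unfold stripZ padZ
  rw [Multiset.filter_add, Multiset.filter_eq_self.2 h, Multiset.filter_eq_nil.2]
  · simp
  · intro a ha
    rw [Multiset.eq_of_mem_replicate ha]
    simp

theorem strip_sum (m : Multiset ℕ) : (stripZ m).sum = m.sum := by
  conv_rhs => rw [← padZ_strip m, padZ_sum]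

theorem strip_card_le (m : Multiset ℕ) : Multiset.card (stripZ m) ≤ Multiset.card m :=
  Multiset.card_le_card (Multiset.filter_le _ _)

/-- Exponent vector. -/
noncomputable def vec3 (a b c : ℕ) : Fin 3 →₀ ℕ :=
  Finsupp.single 0 a + Finsupp.single 1 b + Finsupp.single 2 c

theorem eq_vec3 (n : Fin 3 →₀ ℕ) (a b c : ℕ) : n = vec3 a b c ↔ n 0 = a ∧ n 1 = b ∧ n 2 = c := by
  constructor
  · rintro rfl; simp [vec3]
  · rintro ⟨rfl, rfl, rfl⟩
    ext i
    fin_cases i <;> simp [vec3]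

theorem fermionicExponent_eq (k k₀ k₁ : ℕ) (M : Fin 2 → Fin k → ℕ) :
    fermionicExponent k k₀ k₁ M = ((quadM (M 0) + quadM (M 1) + crossM (M 0) (M 1)
      + linM (fun c => c + 1 - k₀) (M 0) + linM (fun c => c + 1 - (k₀ + k₁)) (M 1) : ℕ) : ℤ) := by
  have e1 : ∀ j j' : Fin k, max 0 ((((j : ℕ) : ℤ) + 1) + (((j' : ℕ) : ℤ) + 1) - (k : ℤ)) =
      ((((j : ℕ) + 1) + ((j' : ℕ) + 1) - k : ℕ) : ℤ) := by intros; omega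
  have e2 : ∀ j : Fin k, max 0 ((((j : ℕ) : ℤ) + 1) - (k₀ : ℤ)) = (((j : ℕ) + 1 - k₀ : ℕ) : ℤ) := by
    intros; omega
  have e3 : ∀ j : Fin k, max 0 ((((j : ℕ) : ℤ) + 1) - (k₀ : ℤ) - (k₁ : ℤ)) =
      (((j : ℕ) + 1 - (k₀ + k₁) : ℕ) : ℤ) := by
    intros; omega
  simp only [fermionicExponent, e1, e2, e3, quadM, crossM, linM, Nat.cast_add, Nat.cast_sum,
    Nat.cast_mul]
  ring

theorem psum_zero_one (a b c : ℕ) (h : c < a + b) :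
    psum (List.replicate a 0 ++ List.replicate b 1) c = c + 1 - a := by
  simp [psum, List.take_append]
  omega

theorem psum_replicate (a x c : ℕ) (h : c < a) :
    psum (List.replicate a x) c = (c + 1) * x := by
  simp [psum, show min (c + 1) a = c + 1 by omega]

theorem bG_eq_Fk (k k₀ k₁ k₂ : ℕ) (hsum : k₀ + k₁ + k₂ = k) (hmin : k₀ * k₂ = 0) :
    bG k 0 k₀ (k₀ + k₁) = Fk k 0 1 (fun c => c + 1 - k₀) (fun c => c + 1 - (k₀ + k₁)) := by
  unfold bG
  rw [show k₀ + k₁ - k₀ = k₁ by omega, show k - (k₀ + k₁) = k₂ by omega]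
  cases k₂ with
  | zero =>
    simp only [bW, WT]
    rw [Wx_eq _ _ _ _ k (by simp [ozs]; omega)]
    refine Fk_congr _ _ _ (fun c hc => ?_) (fun c hc => ?_)
    · simp only [ozs, List.map_replicate, List.append_nil,
        List.reverse_replicate]
      rw [psum_zero_one _ _ _ (by omega)]
    · simp only [ozs, List.map_replicate, List.append_nil,
        List.reverse_replicate, ← List.replicate_add]
      rw [psum_replicate _ _ _ (by omega)]
      omega
  | succ m =>
    obtain rfl : k₀ = 0 := by
      rcases Nat.mul_eq_zero.1 hmin with h | h
      · exact h
      · omega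
    simp only [bW, WT, zero_add, Finset.sum_range_one, pow_zero, one_mul, ozs, ctxW,
      List.replicate_zero, List.nil_append, Nat.sub_zero, ← List.replicate_succ]
    rw [Wx_eq _ _ _ _ k (by simp; omega)]
    refine Fk_congr _ _ _ (fun c hc => ?_) (fun c hc => ?_)
    · simp only [List.map_replicate, List.reverse_replicate, ← List.replicate_add]
      rw [psum_replicate _ _ _ (by omega)]
      omega
    · simp only [List.map_replicate, List.reverse_replicate]
      rw [psum_zero_one _ _ _ (by omega)]

theorem card_rhs (k k₀ k₁ n₁ n₂ d : ℕ) :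
    Nat.card {P : Pads k // wtF 0 1 (fun c => c + 1 - k₀) (fun c => c + 1 - (k₀ + k₁)) P =
      vec3 n₁ n₂ d} =
    Nat.card {MP : (Fin 2 → Fin k → ℕ) × (Fin 2 → Fin k → Multiset ℕ) //
        (∑ j : Fin k, ((j : ℕ) + 1) * MP.1 0 j = n₁) ∧
        (∑ j : Fin k, ((j : ℕ) + 1) * MP.1 1 j = n₂) ∧
        (∀ i j, ∀ x ∈ MP.2 i j, 0 < x) ∧
        (∀ i j, Multiset.card (MP.2 i j) ≤ MP.1 i j) ∧
        (∑ i : Fin 2, ∑ j : Fin k, ((MP.2 i j).sum : ℤ))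
          = (d : ℤ) - fermionicExponent k k₀ k₁ MP.1} := by
  have hw : ∀ P : Pads k, wtF 0 1 (fun c => c + 1 - k₀) (fun c => c + 1 - (k₀ + k₁)) P =
      vec3 n₁ n₂ d ↔ chargeM (cardP P.1) = n₁ ∧ chargeM (cardP P.2) = n₂ ∧
        energy (fun c => c + 1 - k₀) (fun c => c + 1 - (k₀ + k₁)) P = d := by
    intro P
    rw [eq_vec3]
    simp [wtF]
  refine Nat.card_congr ⟨fun P => ⟨(fun i j => Multiset.card (![P.1.1, P.1.2] i j),
    fun i j => stripZ (![P.1.1, P.1.2] i j)), ?_⟩,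
    fun x => ⟨(fun j => padZ (x.1.1 0 j) (x.1.2 0 j), fun j => padZ (x.1.1 1 j) (x.1.2 1 j)), ?_⟩,
    ?_, ?_⟩
  · obtain ⟨P, hP⟩ := P
    obtain ⟨h1, h2, h3⟩ := (hw P).1 hP
    refine ⟨h1, h2, fun i j x hx => (Multiset.mem_filter.1 hx).2, fun i j => strip_card_le _, ?_⟩
    subst h3
    rw [fermionicExponent_eq]
    simp only [energy, sizeP, Fin.sum_univ_two, strip_sum]
    simp only [Matrix.cons_val_zero, Matrix.cons_val_one]
    push_cast [cardP]
    change _ = _ - ((quadM (cardP P.1) : ℤ) + (quadM (cardP P.2) : ℤ)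
      + (crossM (cardP P.1) (cardP P.2) : ℤ) + (linM (fun c => c + 1 - k₀) (cardP P.1) : ℤ)
      + (linM (fun c => c + 1 - (k₀ + k₁)) (cardP P.2) : ℤ))
    ring
  · obtain ⟨⟨M, l⟩, h1, h2, h3, h4, h5⟩ := x
    rw [hw]
    have c0 : ∀ i, cardP (fun j => padZ (M i j) (l i j)) = M i := fun i => by
      funext j; exact padZ_card _ _ (h4 i j)
    simp only [c0]
    refine ⟨h1, h2, ?_⟩
    rw [fermionicExponent_eq] at h5
    simp only [energy, c0, sizeP, padZ_sum]
    simp only [Fin.sum_univ_two] at h5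
    zify
    push_cast at h5
    linarith
  · rintro ⟨P, hP⟩
    apply Subtype.ext
    refine Prod.ext ?_ ?_
    · funext j; exact padZ_strip _
    · funext j; exact padZ_strip _
  · rintro ⟨⟨M, l⟩, h1, h2, h3, h4, h5⟩
    apply Subtype.ext
    refine Prod.ext ?_ ?_
    · funext i j
      fin_cases i
      · exact padZ_card _ _ (h4 0 j)
      · exact padZ_card _ _ (h4 1 j)
    · funext i j
      fin_cases i
      · exact strip_padZ _ _ (h3 0 j)
      · exact strip_padZ _ _ (h3 1 j)

theorem posw_zero_eq (r : ℕ) : posw r 0 = if Even r then 1 else 0 := by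
  by_cases h : Even r <;> simp [posw, posZ, h]

theorem posw_one_eq (r : ℕ) : posw r 1 = if Odd r then 1 else 0 := by
  by_cases h : Even r
  · simp [posw, posZ, h, Nat.not_odd_iff_even.2 h]
  · simp [posw, posZ, h, Nat.not_even_iff_odd.1 h]

theorem wtC_zero_eq (a : ℕ →₀ ℕ) (n₁ n₂ d : ℕ) :
    wtC 0 a = vec3 n₁ n₂ d ↔ configCharge a = (n₁, n₂) ∧ configDegree a = d := by
  rw [eq_vec3, configCharge, configDegree, Prod.mk.injEq, and_assoc]
  simp only [wtC_apply, zero_add, posw_zero_eq, posw_one_eq, posw_two, mul_ite, mul_one, mul_zero,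
    mul_comm]

theorem card_lhs (k k₀ k₁ n₁ n₂ d : ℕ) :
    Nat.card {a : ℕ →₀ ℕ //
        IsAdmissibleConfig k k₀ k₁ a ∧ configCharge a = (n₁, n₂) ∧ configDegree a = d} =
    Nat.card {a : Cfg k k₀ (k₀ + k₁) // wtC 0 a.1 = vec3 n₁ n₂ d} :=
  Nat.card_congr
    ⟨fun a => ⟨⟨a.1, a.2.1⟩, (wtC_zero_eq _ _ _ _).2 a.2.2⟩,
      fun a => ⟨a.1.1, a.1.2, (wtC_zero_eq _ _ _ _).1 a.2⟩, fun _ => rfl, fun _ => rfl⟩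

end FinalMatch


/-- The fermionic formula for `(k,3)`-admissible configurations: the
number of configurations of charge `(n₁, n₂)` and degree `d` equals the sum over charge
contents `M` of the number of `2k`-tuples of partitions of total size `d - E(M)` with
`λ^{(i,c)}` having at most `M_{i,c}` parts. -/
theorem count_admissible_configs_fermionic
    (k k₀ k₁ k₂ : ℕ) (hk : 1 ≤ k) (hsum : k₀ + k₁ + k₂ = k) (hmin : k₀ * k₂ = 0)
    (n₁ n₂ d : ℕ) :
    Nat.card {a : ℕ →₀ ℕ //
        IsAdmissibleConfig k k₀ k₁ a ∧ configCharge a = (n₁, n₂) ∧ configDegree a = d}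
    = Nat.card {MP : (Fin 2 → Fin k → ℕ) × (Fin 2 → Fin k → Multiset ℕ) //
        (∑ j : Fin k, ((j : ℕ) + 1) * MP.1 0 j = n₁) ∧
        (∑ j : Fin k, ((j : ℕ) + 1) * MP.1 1 j = n₂) ∧
        (∀ i j, ∀ x ∈ MP.2 i j, 0 < x) ∧
        (∀ i j, Multiset.card (MP.2 i j) ≤ MP.1 i j) ∧
        (∑ i : Fin 2, ∑ j : Fin k, ((MP.2 i j).sum : ℤ))
          = (d : ℤ) - fermionicExponent k k₀ k₁ MP.1} := by
  have h := congrArg (MvPowerSeries.coeff (vec3 n₁ n₂ d))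
    (compare_zero k k₀ (k₀ + k₁) (by omega) (by omega))
  rw [bG_eq_Fk k k₀ k₁ k₂ hsum hmin] at h
  rw [card_lhs, ← card_rhs]
  exact Nat.cast_injective (R := ℤ) h
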